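/- arXiv:2401.00531 — 2 statements merged into one kernel-verified Lean document; each statement's English description precedes it below -/
import Mathlib

section
/- Let p be a prime and G a group that is pseudo finite at p. Let σ = (R_0 < R_1 < ... < R_m) with m ≥ 1 be a strictly increasing chain of nontrivial finite p-subgroups of G, let Q be a Sylow p-subgroup of N_G(σ), and suppose 1 ≤ i ≤ m satisfies R_i = Q R_{i-1}. Let τ be the chain obtained from σ by deleting R_i. Then Q is a Sylow p-subgroup of N_G(τ). -/
open scoped Pointwise

/-- The conjugate subgroup `g⁻¹ P g`. -/
def conjSub {G : Type*} [Group G] (g : G) (P : Subgroup G) : Subgroup G :=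
  P.map (MulAut.conj g⁻¹).toMonoidHom

/-- `S` is a Sylow `p`-subgroup of the (possibly infinite) group `G`:
a finite `p`-subgroup such that every finite `p`-subgroup of `G` is conjugate
in `G` to a subgroup of `S`. -/
def IsSylow (p : ℕ) {G : Type*} [Group G] (S : Subgroup G) : Prop :=
  Finite S ∧ IsPGroup p S ∧
    ∀ Q : Subgroup G, Finite Q → IsPGroup p Q → ∃ g : G, conjSub g Q ≤ S

/-- `S` is a Sylow `p`-subgroup of the subgroup `N` of `G`:
`S` is a finite `p`-subgroup contained in `N` such that every finite `p`-subgroup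
of `G` contained in `N` is conjugate by an element of `N` to a subgroup of `S`. -/
def IsSylowIn (p : ℕ) {G : Type*} [Group G] (N S : Subgroup G) : Prop :=
  S ≤ N ∧ Finite S ∧ IsPGroup p S ∧
    ∀ Q : Subgroup G, Q ≤ N → Finite Q → IsPGroup p Q → ∃ g ∈ N, conjSub g Q ≤ S

/-- The normalizer of a chain of subgroups: the intersection of the normalizers
of the members of the chain. -/
def chainNorm {G : Type*} [Group G] {n : ℕ} (γ : Fin (n + 1) → Subgroup G) : Subgroup G :=
  ⨅ i, Subgroup.normalizer (γ i : Set G)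

/-- `G` is pseudo finite at `p` if for every chain of finite `p`-subgroups of `G`
(the trivial subgroup allowed in the chain), the normalizer of the chain has a
Sylow `p`-subgroup. -/
def PseudoFiniteAt (p : ℕ) (G : Type*) [Group G] : Prop :=
  ∀ (n : ℕ) (γ : Fin (n + 1) → Subgroup G), Monotone γ →
    (∀ i, Finite (γ i)) → (∀ i, IsPGroup p (γ i)) →
      ∃ S : Subgroup G, IsSylowIn p (chainNorm γ) S

/-- The member of the chain preceding position `i`, with the convention that the
member preceding position `0` is the trivial subgroup. -/
def chainPrev {G : Type*} [Group G] {n : ℕ} (γ : Fin (n + 1) → Subgroup G)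
    (i : Fin (n + 1)) : Subgroup G :=
  match i with
  | ⟨0, _⟩ => ⊥
  | ⟨j + 1, h⟩ => γ ⟨j, by omega⟩

/-- A strictly increasing chain `γ = (P_0 < ⋯ < P_n)` of nontrivial finite
`p`-subgroups is redundant if for every Sylow `p`-subgroup `Q` of `N_G(γ)` and
every `0 ≤ i ≤ n`, `P_i ≠ Q·P_{i-1}` (with `P_{-1} = 1`). -/
def IsRedundant (p : ℕ) {G : Type*} [Group G] {n : ℕ} (γ : Fin (n + 1) → Subgroup G) : Prop :=
  ∀ Q : Subgroup G, IsSylowIn p (chainNorm γ) Q →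
    ∀ i : Fin (n + 1), (γ i : Set G) ≠ (Q : Set G) * (chainPrev γ i : Set G)

/-- The chain obtained from `γ` by inserting the subgroup `H` immediately after
position `i`. -/
def insertChain {G : Type*} [Group G] {n : ℕ} (γ : Fin (n + 1) → Subgroup G)
    (i : Fin (n + 1)) (H : Subgroup G) : Fin (n + 2) → Subgroup G :=
  fun j =>
    if h : (j : ℕ) ≤ (i : ℕ) then γ ⟨j, by have := i.isLt; omega⟩
    else if h2 : (j : ℕ) = (i : ℕ) + 1 then H
    else γ ⟨(j : ℕ) - 1, by have := j.isLt; omega⟩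

/-- The chain obtained from `σ` by deleting the member at position `i`. -/
def deleteChain {G : Type*} [Group G] {n : ℕ} (σ : Fin (n + 2) → Subgroup G)
    (i : Fin (n + 2)) : Fin (n + 1) → Subgroup G :=
  fun j =>
    if h : (j : ℕ) < (i : ℕ) then σ ⟨j, by have := j.isLt; omega⟩
    else σ ⟨(j : ℕ) + 1, by have := j.isLt; omega⟩

/-!
Write `τ` for `σ` with `R_i` deleted. An element of `N_G(τ)` normalizing `Q` also normalizes
`R_i = Q R_{i-1}`, so `N_G(τ) ∩ N_G(Q) ≤ N_G(σ)`. Since `N_G(τ)` has a Sylow `p`-subgroup, it has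
one, `T`, containing `Q`. If `Q < T`, then `Q` is properly contained in its normalizer in the finite
`p`-group `T`; this normalizer lies in `N_G(σ)`, contradicting the maximality of `Q` there.
-/

section Groups

variable {G : Type*} [Group G]

theorem conjSub_eq_conj_smul (g : G) (P : Subgroup G) : conjSub g P = MulAut.conj g⁻¹ • P :=
  rfl

theorem conjSub_mul (g h : G) (P : Subgroup G) :
    conjSub (g * h) P = conjSub h (conjSub g P) := by
  simp only [conjSub_eq_conj_smul, mul_inv_rev, map_mul, mul_smul]

theorem conjSub_le_iff {g : G} {P S : Subgroup G} : conjSub g P ≤ S ↔ P ≤ conjSub g⁻¹ S := by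
  simp only [conjSub_eq_conj_smul, Subgroup.pointwise_smul_subset_iff, map_inv]

theorem conjSub_mono (g : G) : Monotone (conjSub g) := fun _ _ h => Subgroup.map_mono h

theorem conjSub_le_of_mem {g : G} {N P : Subgroup G} (hg : g ∈ N) (hP : P ≤ N) :
    conjSub g P ≤ N :=
  Subgroup.conj_smul_le_of_le hP ⟨g⁻¹, inv_mem hg⟩

theorem card_conjSub (g : G) (P : Subgroup G) : Nat.card (conjSub g P) = Nat.card P :=
  Subgroup.card_map_of_injective (MulAut.conj g⁻¹).injective

theorem lt_inf_normalizer_of_lt {Q T : Subgroup G} [Group.IsNilpotent T] (hQT : Q < T) :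
    Q < T ⊓ Subgroup.normalizer (Q : Set G) := by
  refine lt_of_le_of_ne (le_inf hQT.le Subgroup.le_normalizer) fun hQ => ?_
  have hself : Subgroup.normalizer (Q.subgroupOf T : Set T) = Q.subgroupOf T := by
    rw [← Subgroup.subgroupOf_normalizer_eq hQT.le, ← Subgroup.inf_subgroupOf_left, ← hQ]
  have htop : Q.subgroupOf T = ⊤ :=
    normalizerCondition_iff_only_full_group_self_normalizing.1
      Group.normalizerCondition_of_isNilpotent _ hself
  exact hQT.not_ge (Subgroup.subgroupOf_eq_top.1 htop)

theorem normalizer_inf_normalizer_le_of_coe_eq_mul {Q R S : Subgroup G}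
    (h : (S : Set G) = (Q : Set G) * (R : Set G)) :
    Subgroup.normalizer (Q : Set G) ⊓ Subgroup.normalizer (R : Set G) ≤
      Subgroup.normalizer (S : Set G) := by
  have hS : S = Q ⊔ R := by rw [Subgroup.sup_eq_closure_mul, ← h, Subgroup.closure_eq]
  exact hS ▸ Subgroup.normalizer_inf_normalizer_le_normalizer_sup Q R

end Groups

namespace IsSylowIn

variable {p : ℕ} {G : Type*} [Group G] {M N P Q S : Subgroup G}

theorem conjSub_of_mem (hS : IsSylowIn p N S) {g : G} (hg : g ∈ N) :
    IsSylowIn p N (conjSub g S) := by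
  obtain ⟨hSN, hSfin, hSp, hSconj⟩ := hS
  refine ⟨conjSub_le_of_mem hg hSN, Finite.Set.finite_image _ _, hSp.map _,
    fun P hPN hPfin hPp => ?_⟩
  obtain ⟨h, hh, hPS⟩ := hSconj P hPN hPfin hPp
  exact ⟨h * g, mul_mem hh hg, conjSub_mul h g P ▸ conjSub_mono g hPS⟩

theorem exists_ge (hS : IsSylowIn p N S) (hPN : P ≤ N) (hPfin : Finite P) (hPp : IsPGroup p P) :
    ∃ T, IsSylowIn p N T ∧ P ≤ T := by
  obtain ⟨g, hg, hPS⟩ := hS.2.2.2 P hPN hPfin hPp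
  exact ⟨_, hS.conjSub_of_mem (inv_mem hg), conjSub_le_iff.1 hPS⟩

theorem eq_of_le (hQ : IsSylowIn p N Q) (hPN : P ≤ N) (hPfin : Finite P) (hPp : IsPGroup p P)
    (hQP : Q ≤ P) : Q = P := by
  obtain ⟨-, hQfin, -, hQconj⟩ := hQ
  obtain ⟨g, -, hPQ⟩ := hQconj P hPN hPfin hPp
  exact Subgroup.eq_of_le_of_card_ge hQP (card_conjSub g P ▸ Subgroup.card_le_of_le hPQ)

theorem of_inf_normalizer_le (hp : p.Prime) (hQ : IsSylowIn p N Q) (hNM : N ≤ M)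
    (hM : ∃ S, IsSylowIn p M S) (hMQ : M ⊓ Subgroup.normalizer (Q : Set G) ≤ N) :
    IsSylowIn p M Q := by
  obtain ⟨S, hS⟩ := hM
  obtain ⟨T, hT, hQT⟩ := hS.exists_ge (hQ.1.trans hNM) hQ.2.1 hQ.2.2.1
  suffices hQT_eq : Q = T from hQT_eq ▸ hT
  obtain ⟨hTM, hTfin, hTp, -⟩ := hT
  have : Fact p.Prime := ⟨hp⟩
  have : Group.IsNilpotent T := hTp.isNilpotent
  by_contra hne
  have hlt := lt_inf_normalizer_of_lt (lt_of_le_of_ne hQT hne)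
  have hfin := Finite.of_injective _ (Subgroup.inclusion_injective
    (inf_le_left : T ⊓ Subgroup.normalizer (Q : Set G) ≤ T))
  exact hlt.ne (hQ.eq_of_le ((inf_le_inf_right _ hTM).trans hMQ) hfin
    (hTp.to_le inf_le_left) hlt.le)

end IsSylowIn

section Chains

variable {G : Type*} [Group G] {n : ℕ}

theorem deleteChain_eq_comp_succAbove (σ : Fin (n + 2) → Subgroup G) (i : Fin (n + 2)) :
    deleteChain σ i = σ ∘ i.succAbove := by
  funext j
  simp only [deleteChain, Function.comp_apply, Fin.succAbove, Fin.lt_def, Fin.val_castSucc]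
  split_ifs <;> rfl

theorem chainNorm_le_normalizer (γ : Fin (n + 1) → Subgroup G) (j : Fin (n + 1)) :
    chainNorm γ ≤ Subgroup.normalizer (γ j : Set G) :=
  iInf_le _ j

theorem chainNorm_eq_inf_chainNorm_deleteChain (σ : Fin (n + 2) → Subgroup G) (i : Fin (n + 2)) :
    chainNorm σ = Subgroup.normalizer (σ i : Set G) ⊓ chainNorm (deleteChain σ i) := by
  refine eq_of_forall_le_iff fun H => ?_
  simp only [chainNorm, deleteChain_eq_comp_succAbove, le_inf_iff, le_iInf_iff,
    i.forall_iff_succAbove, Function.comp_apply]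

theorem chainNorm_deleteChain_le_normalizer_chainPrev (σ : Fin (n + 2) → Subgroup G)
    (i : Fin (n + 2)) :
    chainNorm (deleteChain σ i) ≤ Subgroup.normalizer (chainPrev σ i : Set G) := by
  induction i using Fin.cases with
  | zero => exact Subgroup.le_normalizer_of_normal (H := ⊥)
  | succ j =>
    have hj : deleteChain σ j.succ j = chainPrev σ j.succ := by
      rw [deleteChain_eq_comp_succAbove, Function.comp_apply, Fin.succAbove_succ_self]
      rfl
    exact hj ▸ chainNorm_le_normalizer (deleteChain σ j.succ) j

theorem chainNorm_deleteChain_inf_normalizer_le {σ : Fin (n + 2) → Subgroup G} {i : Fin (n + 2)}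
    {Q : Subgroup G} (hprod : (σ i : Set G) = (Q : Set G) * (chainPrev σ i : Set G)) :
    chainNorm (deleteChain σ i) ⊓ Subgroup.normalizer (Q : Set G) ≤ chainNorm σ := by
  rw [chainNorm_eq_inf_chainNorm_deleteChain σ i]
  refine le_inf (le_trans ?_ (normalizer_inf_normalizer_le_of_coe_eq_mul hprod)) inf_le_left
  exact le_inf inf_le_right
    (inf_le_left.trans (chainNorm_deleteChain_le_normalizer_chainPrev σ i))

theorem PseudoFiniteAt.exists_isSylowIn_deleteChain {p : ℕ} (hG : PseudoFiniteAt p G)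
    {σ : Fin (n + 2) → Subgroup G} (hmono : Monotone σ) (hfin : ∀ i, Finite (σ i))
    (hpg : ∀ i, IsPGroup p (σ i)) (i : Fin (n + 2)) :
    ∃ S, IsSylowIn p (chainNorm (deleteChain σ i)) S := by
  rw [deleteChain_eq_comp_succAbove]
  exact hG n _ (hmono.comp i.strictMono_succAbove.monotone) (fun _ => hfin _) fun _ => hpg _

theorem sylow_of_deleted_chain_general {p : ℕ} (hp : p.Prime) {σ : Fin (n + 2) → Subgroup G}
    {Q : Subgroup G} (hQ : IsSylowIn p (chainNorm σ) Q) {i : Fin (n + 2)}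
    (hprod : (σ i : Set G) = (Q : Set G) * (chainPrev σ i : Set G))
    (hdelete : ∃ S, IsSylowIn p (chainNorm (deleteChain σ i)) S) :
    IsSylowIn p (chainNorm (deleteChain σ i)) Q :=
  hQ.of_inf_normalizer_le hp
    ((chainNorm_eq_inf_chainNorm_deleteChain σ i).trans_le inf_le_right) hdelete
    (chainNorm_deleteChain_inf_normalizer_le hprod)

end Chains

/-- In a group pseudo finite at `p`, if `σ = (R_0 < ⋯ < R_m)` with `m ≥ 1` is a
strictly increasing chain of nontrivial finite `p`-subgroups, `Q` is a Sylow
`p`-subgroup of `N_G(σ)`, and `1 ≤ i ≤ m` satisfies `R_i = Q·R_{i-1}`, then `Q`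
is a Sylow `p`-subgroup of the normalizer of the chain obtained by deleting
`R_i`. -/
theorem sylow_of_deleted_chain (p : ℕ) (hp : p.Prime) {G : Type*} [Group G]
    (hG : PseudoFiniteAt p G) {n : ℕ}
    (σ : Fin (n + 2) → Subgroup G) (hmono : StrictMono σ)
    (hnt : ∀ i, σ i ≠ ⊥) (hfin : ∀ i, Finite (σ i)) (hpg : ∀ i, IsPGroup p (σ i))
    (Q : Subgroup G) (hQ : IsSylowIn p (chainNorm σ) Q)
    (i : Fin (n + 2)) (hi : (i : ℕ) ≠ 0)
    (hprod : (σ i : Set G) = (Q : Set G) * (chainPrev σ i : Set G)) :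
    IsSylowIn p (chainNorm (deleteChain σ i)) Q := by
  exact sylow_of_deleted_chain_general hp hQ hprod
    (hG.exists_isSylowIn_deleteChain hmono.monotone hfin hpg i)
end

section
/- Let p be a prime and G a group. Let τ = (P_0 < ... < P_n) and τ' = (P'_0 < ... < P'_n) be redundant chains of nontrivial finite p-subgroups of G, let Q be a Sylow p-subgroup of N_G(τ) and Q' a Sylow p-subgroup of N_G(τ'), let i be the maximal index with Q not contained in P_i and i' the maximal index with Q' not contained in P'_{i'}. Let σ be the chain obtained from τ by inserting QP_i immediately after P_i, and σ' the chain obtained from τ' by inserting Q'P'_{i'} immediately after P'_{i'}. If there exists g ∈ G with g⁻¹σg = σ' (componentwise), then i = i' and there exists h ∈ G with h⁻¹τh = τ' (componentwise). -/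
open scoped Pointwise

/-!
Write `σ` for the chain obtained from `τ` by inserting `Q P_i` after `P_i`. A finite `p`-subgroup
`R` of `N_G(σ)` normalizes `Q P_i ∩ N_G(τ)`, which is `Q` by maximality of the Sylow subgroup `Q`
of `N_G(τ)`; so `R Q` is again a finite `p`-subgroup of `N_G(τ)`, whence `R ≤ Q`. Thus `Q` is the
greatest finite `p`-subgroup of `N_G(σ)`, and `Q P_i` is the first member of `σ` containing `Q`.
Both descriptions are intrinsic to `σ`, so they are respected by conjugation: the inserted
positions agree, and deleting them leaves conjugate chains.
-/

section FinitePSubgroups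

variable {p : ℕ} {G H : Type*} [Group G] [Group H]

/-- The set of finite `p`-subgroups of `G`. Those contained in a subgroup `N` form its intersection
with `Set.Iic N`. -/
def finitePSubgroups (p : ℕ) (G : Type*) [Group G] : Set (Subgroup G) :=
  {R | Finite R ∧ IsPGroup p R}

theorem isLowerSet_finitePSubgroups : IsLowerSet (finitePSubgroups p G) :=
  fun _ _ hRP ⟨_, hP⟩ =>
    ⟨Finite.of_injective _ (Subgroup.inclusion_injective hRP), hP.to_le hRP⟩

theorem sup_mem_finitePSubgroups {R P : Subgroup G} (hR : R ∈ finitePSubgroups p G)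
    (hP : P ∈ finitePSubgroups p G) (hRP : R ≤ Subgroup.normalizer (P : Set G)) :
    R ⊔ P ∈ finitePSubgroups p G := by
  obtain ⟨_, hRp⟩ := hR
  obtain ⟨_, hPp⟩ := hP
  have finite_sup : ((R ⊔ P : Subgroup G) : Set G).Finite := by
    rw [Subgroup.coe_mul_of_left_le_normalizer_right R P hRP]
    exact (Set.toFinite _).mul (Set.toFinite _)
  exact ⟨finite_sup.to_subtype, hRp.to_sup_of_normal_right' hPp hRP⟩

theorem map_mem_finitePSubgroups (f : G →* H) {R : Subgroup G} (hR : R ∈ finitePSubgroups p G) :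
    R.map f ∈ finitePSubgroups p H := by
  obtain ⟨_, hRp⟩ := hR
  exact ⟨((Set.toFinite (R : Set G)).image f).to_subtype, hRp.map f⟩

theorem isGreatest_finitePSubgroups_map (f : G ≃* H) {N Q : Subgroup G}
    (hQ : IsGreatest (finitePSubgroups p G ∩ Set.Iic N) Q) :
    IsGreatest (finitePSubgroups p H ∩ Set.Iic (f.mapSubgroup N)) (f.mapSubgroup Q) := by
  refine ⟨⟨map_mem_finitePSubgroups _ hQ.1.1, f.mapSubgroup.monotone hQ.1.2⟩, fun R hR => ?_⟩
  rw [← f.mapSubgroup.symm_apply_le]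
  exact hQ.2 ⟨map_mem_finitePSubgroups _ hR.1, f.mapSubgroup.symm_apply_le.2 hR.2⟩

end FinitePSubgroups

section Sylow

variable {p : ℕ} {G : Type*} [Group G] {N Q P : Subgroup G}

theorem IsSylowIn.mem_finitePSubgroups (hQ : IsSylowIn p N Q) : Q ∈ finitePSubgroups p G :=
  ⟨hQ.2.1, hQ.2.2.1⟩

theorem IsSylowIn.maximal (hQ : IsSylowIn p N Q) :
    Maximal (· ∈ finitePSubgroups p G ∩ Set.Iic N) Q := by
  refine ⟨⟨hQ.mem_finitePSubgroups, hQ.1⟩, fun M hM hQM => ?_⟩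
  obtain ⟨_, _, _, exists_conj_le⟩ := hQ
  obtain ⟨g, -, hg⟩ := exists_conj_le M hM.2 hM.1.1 hM.1.2
  have : Finite M := hM.1.1
  have card_le : Nat.card M ≤ Nat.card Q :=
    calc Nat.card M = Nat.card (conjSub g M) :=
          (Subgroup.card_map_of_injective (MulAut.conj g⁻¹).injective).symm
      _ ≤ Nat.card Q := Subgroup.card_le_of_le hg
  exact (Subgroup.eq_of_le_of_card_ge hQM card_le).ge

theorem IsSylowIn.sup_inf_eq_left (hQ : IsSylowIn p N Q) (hP : P ∈ finitePSubgroups p G)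
    (hQP : Q ≤ Subgroup.normalizer (P : Set G)) : (Q ⊔ P) ⊓ N = Q :=
  (hQ.maximal.eq_of_le
    ⟨isLowerSet_finitePSubgroups inf_le_left
      (sup_mem_finitePSubgroups hQ.mem_finitePSubgroups hP hQP), Set.mem_Iic.2 inf_le_right⟩
    (le_inf le_sup_left hQ.1)).symm

theorem IsSylowIn.isGreatest_normalizer_sup_inf (hQ : IsSylowIn p N Q)
    (hP : P ∈ finitePSubgroups p G) (hQP : Q ≤ Subgroup.normalizer (P : Set G)) :
    IsGreatest (finitePSubgroups p G ∩
      Set.Iic (Subgroup.normalizer ((Q ⊔ P : Subgroup G) : Set G) ⊓ N)) Q := by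
  refine ⟨⟨hQ.mem_finitePSubgroups, le_inf (le_sup_left.trans Subgroup.le_normalizer) hQ.1⟩, ?_⟩
  rintro R ⟨hR, hRN⟩
  have R_normalizes_Q : R ≤ Subgroup.normalizer (Q : Set G) :=
    calc R ≤ Subgroup.normalizer ((Q ⊔ P : Subgroup G) : Set G) ⊓ N := hRN
      _ ≤ Subgroup.normalizer ((Q ⊔ P : Subgroup G) : Set G) ⊓ Subgroup.normalizer (N : Set G) :=
          inf_le_inf_left _ Subgroup.le_normalizer
      _ ≤ Subgroup.normalizer (((Q ⊔ P) ⊓ N : Subgroup G) : Set G) :=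
          Subgroup.inf_normalizer_le_normalizer_inf
      _ = Subgroup.normalizer (Q : Set G) := by rw [hQ.sup_inf_eq_left hP hQP]
  have sup_mem : R ⊔ Q ∈ finitePSubgroups p G ∩ Set.Iic N :=
    ⟨sup_mem_finitePSubgroups hR hQ.mem_finitePSubgroups R_normalizes_Q,
      sup_le (hRN.trans inf_le_right) hQ.1⟩
  exact le_sup_left.trans (hQ.maximal.le_of_ge sup_mem le_sup_right)

end Sylow

section Chains

variable {p : ℕ} {G : Type*} [Group G] {n : ℕ}

theorem conjSub_eq_mapSubgroup (g : G) (P : Subgroup G) :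
    conjSub g P = (MulAut.conj g⁻¹).mapSubgroup P :=
  rfl

theorem conjSub_le_conjSub {g : G} {P R : Subgroup G} : conjSub g P ≤ conjSub g R ↔ P ≤ R :=
  (MulAut.conj g⁻¹).mapSubgroup.le_iff_le

theorem conjSub_chainNorm (g : G) (γ : Fin (n + 1) → Subgroup G) :
    conjSub g (chainNorm γ) = chainNorm fun j => conjSub g (γ j) := by
  rw [conjSub_eq_mapSubgroup, chainNorm, OrderIso.map_iInf]
  exact iInf_congr fun j => Subgroup.map_equiv_normalizer_eq (γ j) (MulAut.conj g⁻¹)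

theorem insertChain_eq_insertNth (γ : Fin (n + 1) → Subgroup G) (i : Fin (n + 1))
    (H : Subgroup G) : insertChain γ i H = i.succ.insertNth H γ := by
  refine Fin.eq_insertNth_iff.2 ⟨by simp [insertChain], funext fun j => ?_⟩
  rcases le_or_gt j i with hji | hij
  · have hji' : (j : ℕ) ≤ i := hji
    simp [Fin.removeNth, insertChain, Fin.succAbove_succ_of_le _ _ hji, hji']
  · have hij' : (i : ℕ) < j := hij
    simp [Fin.removeNth, insertChain, Fin.succAbove_succ_of_lt _ _ hij, hij'.ne', hij.not_gt]

theorem insertChain_succ (γ : Fin (n + 1) → Subgroup G) (i : Fin (n + 1)) (H : Subgroup G) :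
    insertChain γ i H i.succ = H := by
  rw [insertChain_eq_insertNth, Fin.insertNth_apply_same]

theorem insertChain_succAbove (γ : Fin (n + 1) → Subgroup G) (i : Fin (n + 1)) (H : Subgroup G)
    (j : Fin (n + 1)) : insertChain γ i H (i.succ.succAbove j) = γ j := by
  rw [insertChain_eq_insertNth, Fin.insertNth_apply_succAbove]

theorem chainNorm_insertChain (γ : Fin (n + 1) → Subgroup G) (i : Fin (n + 1))
    (H : Subgroup G) :
    chainNorm (insertChain γ i H) = Subgroup.normalizer (H : Set G) ⊓ chainNorm γ := by
  ext x
  simp only [chainNorm, Subgroup.mem_iInf, Subgroup.mem_inf, Fin.forall_iff_succAbove i.succ,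
    insertChain_succ, insertChain_succAbove]

theorem IsSylowIn.isGreatest_chainNorm_insertChain {τ : Fin (n + 1) → Subgroup G}
    {Q : Subgroup G} (hQ : IsSylowIn p (chainNorm τ) Q) {i : Fin (n + 1)}
    (hτi : τ i ∈ finitePSubgroups p G) :
    IsGreatest (finitePSubgroups p G ∩ Set.Iic (chainNorm (insertChain τ i (Q ⊔ τ i)))) Q := by
  rw [chainNorm_insertChain]
  exact hQ.isGreatest_normalizer_sup_inf hτi (hQ.1.trans (iInf_le _ i))

theorem isLeast_le_insertChain_sup {τ : Fin (n + 1) → Subgroup G} (hτ : Monotone τ)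
    {Q : Subgroup G} {i : Fin (n + 1)} (hi : ¬ Q ≤ τ i) :
    IsLeast {j | Q ≤ insertChain τ i (Q ⊔ τ i) j} i.succ := by
  constructor
  · exact le_sup_left.trans_eq (insertChain_succ τ i _).symm
  · intro j hj
    by_contra! hji
    obtain ⟨k, rfl⟩ := Fin.exists_succAbove_eq hji.ne
    have hki : k ≤ i := Fin.castSucc_lt_succ_iff.1 (Fin.succAbove_lt_iff_castSucc_lt _ _ |>.1 hji)
    have hQk : Q ≤ τ k := by simpa only [insertChain_succAbove] using Set.mem_ofPred.1 hj
    exact hi (hQk.trans (hτ hki))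

end Chains

theorem insert_injective_general {p : ℕ} {G : Type*} [Group G] {n : ℕ}
    {τ τ' : Fin (n + 1) → Subgroup G} (hτ : Monotone τ) (hτ' : Monotone τ')
    {Q Q' : Subgroup G} (hQ : IsSylowIn p (chainNorm τ) Q) (hQ' : IsSylowIn p (chainNorm τ') Q')
    {i i' : Fin (n + 1)} (hτi : τ i ∈ finitePSubgroups p G)
    (hτi' : τ' i' ∈ finitePSubgroups p G) (hi : ¬ Q ≤ τ i) (hi' : ¬ Q' ≤ τ' i') {g : G}
    (hg : ∀ j, conjSub g (insertChain τ i (Q ⊔ τ i) j) = insertChain τ' i' (Q' ⊔ τ' i') j) :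
    i = i' ∧ ∀ j, conjSub g (τ j) = τ' j := by
  have conj_Q : conjSub g Q = Q' := by
    have greatest_conj_Q := isGreatest_finitePSubgroups_map (MulAut.conj g⁻¹)
      (hQ.isGreatest_chainNorm_insertChain hτi)
    rw [← conjSub_eq_mapSubgroup, ← conjSub_eq_mapSubgroup, conjSub_chainNorm, funext hg]
      at greatest_conj_Q
    exact greatest_conj_Q.unique (hQ'.isGreatest_chainNorm_insertChain hτi')
  have index_eq : i = i' := by
    have le_member_iff (j) :
        Q' ≤ insertChain τ' i' (Q' ⊔ τ' i') j ↔ Q ≤ insertChain τ i (Q ⊔ τ i) j := by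
      rw [← hg j, ← conj_Q, conjSub_le_conjSub]
    have least_i' := isLeast_le_insertChain_sup hτ' hi'
    simp only [le_member_iff] at least_i'
    exact Fin.succ_injective _ ((isLeast_le_insertChain_sup hτ hi).unique least_i')
  subst index_eq
  refine ⟨rfl, fun j => ?_⟩
  simpa only [insertChain_succAbove] using hg (i.succ.succAbove j)

/-- If `τ` and `τ'` are redundant chains of nontrivial finite `p`-subgroups,
`Q`, `Q'` are Sylow `p`-subgroups of their chain normalizers, `i`, `i'` are the
maximal indices with `Q ⊄ P_i`, `Q' ⊄ P'_{i'}`, and the chains `σ`, `σ'`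
obtained by inserting `Q·P_i` after position `i`, resp. `Q'·P'_{i'}` after
position `i'`, are conjugate in `G`, then `i = i'` and `τ`, `τ'` are conjugate
in `G`. -/
theorem insert_injective (p : ℕ) (hp : p.Prime) {G : Type*} [Group G] {n : ℕ}
    (τ τ' : Fin (n + 1) → Subgroup G)
    (hmono : StrictMono τ) (hmono' : StrictMono τ')
    (hnt : ∀ i, τ i ≠ ⊥) (hnt' : ∀ i, τ' i ≠ ⊥)
    (hfin : ∀ i, Finite (τ i)) (hfin' : ∀ i, Finite (τ' i))
    (hpg : ∀ i, IsPGroup p (τ i)) (hpg' : ∀ i, IsPGroup p (τ' i))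
    (hred : IsRedundant p τ) (hred' : IsRedundant p τ')
    (Q Q' : Subgroup G) (hQ : IsSylowIn p (chainNorm τ) Q)
    (hQ' : IsSylowIn p (chainNorm τ') Q')
    (i i' : Fin (n + 1))
    (hi : ¬ Q ≤ τ i) (himax : ∀ j : Fin (n + 1), i < j → Q ≤ τ j)
    (hi' : ¬ Q' ≤ τ' i') (himax' : ∀ j : Fin (n + 1), i' < j → Q' ≤ τ' j)
    (hconj : ∃ g : G, ∀ j : Fin (n + 2),
      conjSub g (insertChain τ i (Q ⊔ τ i) j) = insertChain τ' i' (Q' ⊔ τ' i') j) :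
    i = i' ∧ ∃ h : G, ∀ j : Fin (n + 1), conjSub h (τ j) = τ' j := by
  obtain ⟨g, hg⟩ := hconj
  exact (insert_injective_general hmono.monotone hmono'.monotone hQ hQ' ⟨hfin i, hpg i⟩
    ⟨hfin' i', hpg' i'⟩ hi hi' hg).imp_right fun hτ => ⟨g, hτ⟩
end
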